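/- Let G be a finite non-abelian d-group (d prime) possessing an abelian maximal subgroup. Then G has maximal nilpotency class if and only if either |Z(G)| = d or [G : G'] = d^2. -/

import Mathlib

/-! Let `A` be an abelian normal subgroup with `G ⧸ A` cyclic, generated by the class of `x`. Then
`a ↦ ⁅x, a⁆` is an endomorphism `f` of `A` with kernel `A ∩ Z(G)` and range `G'`, so that
`|A| = |A ∩ Z(G)| |G'|`. If `A` is a maximal subgroup of a non-abelian `d`-group, then `Z(G) ≤ A`
and this reads `[G : G'] = d |Z(G)|`, so the two conditions of the theorem are equivalent. Moreover
`f ^ c` is trivial, `c` being the class of `G`, whence `|A| ≤ |ker f| ^ c ≤ |Z(G)| ^ c`: a center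
of order `d` forces the class to be maximal. The converse is the inequality `d ^ c ≤ [G : Z(G)]`,
valid in every non-abelian `d`-group. -/

open Subgroup
open scoped commutatorElement

theorem card_le_card_ker_pow_of_iterate_eq_one {A : Type*} [Group A] [Finite A] (f : A →* A)
    {n : ℕ} {K : Subgroup A} (hK : ∀ a ∈ K, f^[n] a = 1) :
    Nat.card K ≤ Nat.card f.ker ^ n := by
  induction n generalizing K with
  | zero =>
    have hbot : K = ⊥ := (eq_bot_iff_forall K).mpr hK
    rw [hbot, card_bot, pow_zero]
  | succ n ih =>
    have hmap : ∀ b ∈ K.map f, f^[n] b = 1 := by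
      rintro _ ⟨a, ha, rfl⟩
      exact hK a ha
    calc Nat.card K
        = Nat.card (f.ker.subgroupOf K) * Nat.card (K.map f) := by
          rw [← relIndex_ker, relIndex, card_mul_index]
      _ ≤ Nat.card f.ker * Nat.card f.ker ^ n := by
          refine Nat.mul_le_mul ?_ (ih hmap)
          rw [← card_map_of_injective K.subtype_injective, subgroupOf_map_subtype]
          exact card_le_of_le inf_le_left
      _ = Nat.card f.ker ^ (n + 1) := (pow_succ' _ _).symm

section AbelianNormalSubgroup

variable {G : Type*} [Group G] {A : Subgroup G} {x : G}

theorem commutator_le_of_forall_commutatorElement_mem [IsMulCommutative A]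
    (hx : A ⊔ zpowers x = ⊤) {N : Subgroup G} [N.Normal]
    (hN : ∀ a ∈ A, ⁅x, a⁆ ∈ N) : commutator G ≤ N := by
  let q := QuotientGroup.mk' N
  have hxA (a : G) (ha : a ∈ A) : Commute (q x) (q a) := by
    rw [← commutatorElement_eq_one_iff_commute, ← map_commutatorElement]
    exact (QuotientGroup.eq_one_iff _).mpr (hN a ha)
  have hcomm : IsMulCommutative (closure (q '' insert x A)) := by
    refine isMulCommutative_closure ?_
    rintro _ ⟨a, rfl | ha, rfl⟩ _ ⟨b, rfl | hb, rfl⟩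
    · rfl
    · exact hxA b hb
    · exact (hxA a ha).symm
    · exact Commute.map (setLike_mul_comm ha hb) q
  have htop : closure (q '' insert x A) = ⊤ := by
    rw [← MonoidHom.map_closure, Set.insert_eq, Subgroup.closure_union, closure_eq, sup_comm,
      ← zpowers_eq_closure, hx]
    exact map_top_of_surjective q (QuotientGroup.mk'_surjective N)
  rw [htop] at hcomm
  exact Normal.quotient_commutative_iff_commutator_le.mp
    (isMulCommutative_iff.mpr fun g h => setLike_mul_comm (mem_top g) (mem_top h))

variable [A.Normal]

variable (A) in
open scoped IsMulCommutative in
/-- The endomorphism `a ↦ ⁅x, a⁆` of an abelian normal subgroup `A`, as the quotient of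
conjugation by `x` and the identity in the abelian group of endomorphisms of `A`. -/
def commutatorHom [IsMulCommutative A] (x : G) : A →* A :=
  (MulAut.conjNormal x).toMonoidHom / MonoidHom.id A

theorem exists_sup_zpowers_eq_top_of_isCyclic_quotient [IsCyclic (G ⧸ A)] :
    ∃ x : G, A ⊔ zpowers x = ⊤ := by
  obtain ⟨y, hy⟩ := IsCyclic.exists_generator (α := G ⧸ A)
  obtain ⟨x, rfl⟩ := QuotientGroup.mk'_surjective A y
  have hmap : (zpowers x).map (QuotientGroup.mk' A) = ⊤ := by
    rw [MonoidHom.map_zpowers, eq_top_iff']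
    exact hy
  refine ⟨x, ?_⟩
  rw [sup_comm, ← QuotientGroup.ker_mk' A, ← comap_map_eq, hmap, comap_top]

variable [IsMulCommutative A]

open scoped IsMulCommutative in
@[simp]
theorem coe_commutatorHom_apply (a : A) : (commutatorHom A x a : G) = ⁅x, (a : G)⁆ := by
  rw [commutatorHom, MonoidHom.div_apply, coe_div, MulEquiv.toMonoidHom_eq_coe, MonoidHom.coe_coe,
    MulAut.conjNormal_apply, MonoidHom.id_apply, commutatorElement_def, div_eq_mul_inv]

theorem coe_iterate_commutatorHom_mem_lowerCentralSeries (n : ℕ) (a : A) :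
    ((commutatorHom A x)^[n] a : G) ∈ (⊤ : Subgroup G).lowerCentralSeries n := by
  induction n with
  | zero => exact mem_top _
  | succ n ih =>
    rw [Function.iterate_succ_apply', coe_commutatorHom_apply, Subgroup.lowerCentralSeries_succ,
      commutator_comm]
    exact commutator_mem_commutator (mem_top x) ih

theorem ker_commutatorHom (hx : A ⊔ zpowers x = ⊤) :
    (commutatorHom A x).ker = (center G).subgroupOf A := by
  ext a
  rw [MonoidHom.mem_ker, ← OneMemClass.coe_eq_one, coe_commutatorHom_apply,
    commutatorElement_eq_one_iff_mul_comm, mem_subgroupOf, ← SetLike.mem_coe (p := center G),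
    ← Set.singleton_subset_iff, ← centralizer_eq_top_iff_subset]
  constructor
  · intro hxa
    rw [eq_top_iff, ← hx, sup_le_iff, zpowers_le, mem_centralizer_singleton_iff]
    exact ⟨A.le_centralizer.trans (centralizer_le (Set.singleton_subset_iff.mpr a.2)), hxa⟩
  · intro htop
    exact mem_centralizer_singleton_iff.mp (htop ▸ mem_top x)

theorem normal_of_range_commutatorHom_le (hx : A ⊔ zpowers x = ⊤) {N : Subgroup G}
    (hN : (commutatorHom A x).range.map A.subtype ≤ N) (hNA : N ≤ A) : N.Normal := by
  have hcomm (a : G) (ha : a ∈ A) : ⁅x, a⁆ ∈ N :=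
    hN ⟨_, ⟨⟨a, ha⟩, rfl⟩, coe_commutatorHom_apply _⟩
  rw [← normalizer_eq_top_iff, eq_top_iff, ← hx, sup_le_iff, zpowers_le, mem_normalizer_iff]
  refine ⟨(A.le_centralizer.trans (centralizer_le hNA)).trans (centralizer_le_normalizer _),
    fun n => ?_⟩
  have hmem (hn : n ∈ A) : n ∈ N ↔ x * n * x⁻¹ ∈ N := by
    rw [← MulAut.conj_apply, conj_eq_commutatorElement_mul, mul_mem_cancel_left (hcomm n hn)]
  exact ⟨fun hn => (hmem (hNA hn)).mp hn,
    fun hn => (hmem (by simpa [mul_assoc] using Normal.conj_mem' ‹_› _ (hNA hn) x)).mpr hn⟩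

theorem map_subtype_range_commutatorHom (hx : A ⊔ zpowers x = ⊤) :
    (commutatorHom A x).range.map A.subtype = commutator G := by
  have hN : ((commutatorHom A x).range.map A.subtype).Normal :=
    normal_of_range_commutatorHom_le hx le_rfl (map_subtype_le _)
  refine le_antisymm ?_ (commutator_le_of_forall_commutatorElement_mem hx fun a ha =>
    ⟨_, ⟨⟨a, ha⟩, rfl⟩, coe_commutatorHom_apply _⟩)
  rintro _ ⟨_, ⟨a, rfl⟩, rfl⟩
  rw [subtype_apply, coe_commutatorHom_apply, _root_.commutator_def]
  exact commutator_mem_commutator (mem_top x) (mem_top (a : G))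

variable (A) [IsCyclic (G ⧸ A)]

theorem relIndex_center_eq_card_commutator :
    (center G).relIndex A = Nat.card (commutator G) := by
  obtain ⟨x, hx⟩ := exists_sup_zpowers_eq_top_of_isCyclic_quotient (A := A)
  rw [relIndex, ← ker_commutatorHom hx, index_ker, ← map_subtype_range_commutatorHom hx,
    card_map_of_injective A.subtype_injective]

theorem index_commutator_eq_card_center_mul_index [Finite (commutator G)] (hA : center G ≤ A) :
    (commutator G).index = Nat.card (center G) * A.index := by
  refine Nat.eq_of_mul_eq_mul_left (Nat.card_pos (α := commutator G)) ?_
  calc Nat.card (commutator G) * (commutator G).index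
      = Nat.card (center G) * (center G).index := by rw [card_mul_index, card_mul_index]
    _ = Nat.card (center G) * (Nat.card (commutator G) * A.index) := by
      rw [← relIndex_mul_index hA, relIndex_center_eq_card_commutator]
    _ = Nat.card (commutator G) * (Nat.card (center G) * A.index) := mul_left_comm _ _ _

theorem card_le_card_center_pow_nilpotencyClass [Finite G] [Group.IsNilpotent G] :
    Nat.card A ≤ Nat.card (center G) ^ Group.nilpotencyClass G := by
  obtain ⟨x, hx⟩ := exists_sup_zpowers_eq_top_of_isCyclic_quotient (A := A)
  have hiter (a : A) : (commutatorHom A x)^[Group.nilpotencyClass G] a = 1 := by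
    have ha := coe_iterate_commutatorHom_mem_lowerCentralSeries (x := x)
      (Group.nilpotencyClass G) a
    rwa [Subgroup.lowerCentralSeries_nilpotencyClass, mem_bot, OneMemClass.coe_eq_one] at ha
  calc Nat.card A = Nat.card (⊤ : Subgroup A) := card_top.symm
    _ ≤ Nat.card (commutatorHom A x).ker ^ Group.nilpotencyClass G :=
      card_le_card_ker_pow_of_iterate_eq_one _ fun a _ => hiter a
    _ ≤ Nat.card (center G) ^ Group.nilpotencyClass G := by
      refine Nat.pow_le_pow_left ?_ _
      rw [ker_commutatorHom hx, ← card_map_of_injective A.subtype_injective,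
        subgroupOf_map_subtype]
      exact card_le_of_le inf_le_left

end AbelianNormalSubgroup

section MaximalSubgroup

variable {G : Type*} [Group G] {A : Subgroup G}

theorem center_le_of_isCoatom (hA : IsCoatom A) [IsMulCommutative A]
    (hcomm : ¬ IsMulCommutative G) : center G ≤ A := by
  by_contra hZ
  have hsup : A ⊔ center G = ⊤ := hA.2 _ (left_lt_sup.mpr hZ)
  have hcentralizer : centralizer (A : Set G) = ⊤ :=
    top_le_iff.mp (hsup ▸ sup_le A.le_centralizer (center_le_centralizer _))
  have hAZ : A ≤ center G := centralizer_eq_top_iff_subset.mp hcentralizer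
  rw [sup_eq_right.mpr hAZ] at hsup
  exact hcomm (isMulCommutative_iff.mpr fun a b =>
    mem_center_iff.mp (hsup ▸ mem_top b) a)

theorem isSimpleGroup_quotient_of_isCoatom [A.Normal] (hA : IsCoatom A) :
    IsSimpleGroup (G ⧸ A) where
  exists_pair_ne := (QuotientGroup.nontrivial_iff.mpr hA.1).exists_pair_ne
  eq_bot_or_eq_top_of_normal K _ := by
    have hle : A ≤ K.comap (QuotientGroup.mk' A) := QuotientGroup.le_comap_mk' A K
    refine (hA.le_iff.mp hle).symm.imp (fun hK => ?_) (fun hK => ?_) <;>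
      refine comap_injective (QuotientGroup.mk'_surjective A) ?_
    · rw [hK, MonoidHom.comap_bot, QuotientGroup.ker_mk']
    · rw [hK, comap_top]

open scoped IsMulCommutative in
theorem prime_index_of_isCoatom [Group.IsSolvable G] [A.Normal] (hA : IsCoatom A) :
    A.index.Prime :=
  have := isSimpleGroup_quotient_of_isCoatom hA
  have : IsMulCommutative (G ⧸ A) :=
    isMulCommutative_iff.mpr (IsSimpleGroup.comm_iff_isSolvable.mpr inferInstance)
  IsSimpleGroup.prime_card (α := G ⧸ A)

end MaximalSubgroup

section PGroup

variable {G : Type*} [Group G] {p : ℕ} [Fact p.Prime]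

theorem index_eq_of_isCoatom_of_isPGroup [Group.IsSolvable G] {A : Subgroup G} [A.Normal]
    (hG : IsPGroup p G) (hA : IsCoatom A) : A.index = p := by
  have hprime := prime_index_of_isCoatom hA
  have : A.FiniteIndex := ⟨hprime.ne_zero⟩
  obtain ⟨n, hn⟩ := hG.index A
  have hdvd : A.index ∣ p := hprime.dvd_of_dvd_pow hn.dvd
  exact (Nat.prime_dvd_prime_iff_eq hprime Fact.out).mp hdvd

variable [Finite G]

theorem sq_le_card_of_not_isCyclic (hG : IsPGroup p G) (hcyc : ¬ IsCyclic G) :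
    p ^ 2 ≤ Nat.card G := by
  obtain ⟨n, hn⟩ := hG.exists_card_eq
  contrapose! hcyc
  rw [hn, Nat.pow_lt_pow_iff_right (Fact.out : p.Prime).one_lt] at hcyc
  have hdvd : Nat.card G ∣ p := by
    simpa only [hn, pow_one] using pow_dvd_pow p (Nat.le_of_lt_succ hcyc)
  exact isCyclic_of_card_dvd_prime hdvd

theorem le_card_center [Nontrivial G] (hG : IsPGroup p G) : p ≤ Nat.card (center G) :=
  have := hG.center_nontrivial
  Nat.le_of_dvd Nat.card_pos
    ((hG.to_subgroup (center G)).card_eq_or_dvd.resolve_left Finite.one_lt_card.ne')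

theorem pow_nilpotencyClass_le_index_center (hG : IsPGroup p G) (hcomm : ¬ IsMulCommutative G) :
    p ^ Group.nilpotencyClass G ≤ (center G).index := by
  have := hG.isNilpotent
  revert ‹Finite G› hG hcomm
  refine Group.nilpotent_center_quotient_ind
    (P := fun (G) [Group G] [Group.IsNilpotent G] => ∀ [Finite G], IsPGroup p G →
      ¬ IsMulCommutative G → p ^ Group.nilpotencyClass G ≤ (center G).index) G ?_ ?_
  · intro G _ _ _ _ hcomm
    exact absurd (inferInstance : IsMulCommutative G) hcomm
  intro G _ _ ih _ hG hcomm
  have : Nontrivial G := not_subsingleton_iff_nontrivial.mp fun _ => hcomm inferInstance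
  have hquot : IsPGroup p (G ⧸ center G) := hG.to_quotient _
  have hcyc : ¬ IsCyclic (G ⧸ center G) := fun _ =>
    hcomm (isMulCommutative_of_isCyclic_quotient_center_self G)
  rw [Group.nilpotencyClass_eq_quotient_center_plus_one, index]
  by_cases hquotComm : IsMulCommutative (G ⧸ center G)
  · have hclass : Group.nilpotencyClass (G ⧸ center G) ≤ 1 :=
      Group.IsNilpotent.nilpotencyClass_le_one_iff.mpr hquotComm
    exact (Nat.pow_le_pow_right (Fact.out : p.Prime).pos (Nat.succ_le_succ hclass)).trans
      (sq_le_card_of_not_isCyclic hquot hcyc)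
  · have : Nontrivial (G ⧸ center G) :=
      not_subsingleton_iff_nontrivial.mp fun _ => hquotComm inferInstance
    rw [pow_succ', ← card_mul_index (center (G ⧸ center G))]
    exact Nat.mul_le_mul (le_card_center hquot) (ih hquot hquotComm)

theorem nilpotencyClass_eq_iff_card_center_eq {A : Subgroup G} [A.Normal] [IsMulCommutative A]
    {n : ℕ} (hcard : Nat.card G = p ^ (n + 1)) (hcomm : ¬ IsMulCommutative G)
    (hA : A.index = p) :
    Group.nilpotencyClass G = n ↔ Nat.card (center G) = p := by
  have hp : p.Prime := Fact.out
  have hG : IsPGroup p G := .of_card hcard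
  have := hG.isNilpotent
  have : Nontrivial G := not_subsingleton_iff_nontrivial.mp fun _ => hcomm inferInstance
  have : IsCyclic (G ⧸ A) := isCyclic_of_prime_card hA
  have hle : Nat.card (center G) * p ^ Group.nilpotencyClass G ≤ p * p ^ n := by
    rw [← pow_succ', ← hcard, ← card_mul_index (center G)]
    exact Nat.mul_le_mul_left _ (pow_nilpotencyClass_le_index_center hG hcomm)
  constructor
  · rintro rfl
    exact (Nat.le_of_mul_le_mul_right hle (pow_pos hp.pos _)).antisymm (le_card_center hG)
  · intro hZ
    have hcardA : Nat.card A = p ^ n := by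
      rw [← A.card_mul_index, hA, pow_succ] at hcard
      exact Nat.eq_of_mul_eq_mul_right hp.pos hcard
    have hge : p ^ n ≤ p ^ Group.nilpotencyClass G := by
      simpa only [hcardA, hZ] using card_le_card_center_pow_nilpotencyClass A
    rw [hZ] at hle
    exact ((Nat.pow_le_pow_iff_right hp.one_lt).mp (Nat.le_of_mul_le_mul_left hle hp.pos)).antisymm
      ((Nat.pow_le_pow_iff_right hp.one_lt).mp hge)

end PGroup

/-- Let `G` be a finite non-abelian `d`-group (`d` prime) of order `d^m`
possessing an abelian maximal subgroup. Then `G` has maximal nilpotency class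
(nilpotency class `m - 1`) if and only if either `|Z(G)| = d` or `[G : G'] = d²`. -/
theorem stmt3 {G : Type*} [Group G] [Finite G] [Group.IsNilpotent G]
    (d : ℕ) (hd : d.Prime) (m : ℕ)
    (hcard : Nat.card G = d ^ m)
    (hnab : ¬ ∀ a b : G, a * b = b * a)
    (hab : ∃ H : Subgroup G, IsCoatom H ∧ ∀ a ∈ H, ∀ b ∈ H, a * b = b * a) :
    Group.nilpotencyClass G = m - 1 ↔
      (Nat.card (Subgroup.center G) = d ∨ (commutator G).index = d ^ 2) := by
  obtain ⟨A, hA, hAcomm⟩ := hab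
  have : Fact d.Prime := ⟨hd⟩
  have hcomm : ¬ IsMulCommutative G := mt isMulCommutative_iff.mp hnab
  have : IsMulCommutative A := .of_setLike_mul_comm fun {a} ha {b} hb => hAcomm a ha b hb
  have : A.Normal :=
    NormalizerCondition.normal_of_coatom A Group.normalizerCondition_of_isNilpotent hA
  have hindex : A.index = d := index_eq_of_isCoatom_of_isPGroup (.of_card hcard) hA
  have : IsCyclic (G ⧸ A) := isCyclic_of_prime_card hindex
  have hm : m ≠ 0 := by
    rintro rfl
    have : Subsingleton G := Finite.card_le_one_iff_subsingleton.mp hcard.le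
    exact hcomm inferInstance
  obtain ⟨n, rfl⟩ := Nat.exists_eq_succ_of_ne_zero hm
  have hiff : (commutator G).index = d ^ 2 ↔ Nat.card (center G) = d := by
    rw [index_commutator_eq_card_center_mul_index A (center_le_of_isCoatom hA hcomm), hindex, sq,
      Nat.mul_left_inj hd.ne_zero]
  rw [hiff, or_self]
  exact nilpotencyClass_eq_iff_card_center_eq hcard hcomm hindex
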